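/- Let $-1 < \alpha < \infty$, $0 < t < \infty$, $\beta = 1 + (n+1+\alpha)/t$, and suppose $M_g: A^t_\alpha \to B^\beta$ is bounded. Then $g$ is a bounded holomorphic function on $\mathbb{B}_n$, i.e., $\sup_{a \in \mathbb{B}_n} |g(a)| < \infty$. -/

import Mathlib

open MeasureTheory

noncomputable section

abbrev Cn (n : ℕ) := EuclideanSpace ℂ (Fin n)


noncomputable instance (n : ℕ) : MeasurableSpace (Cn n) := borel _
instance (n : ℕ) : BorelSpace (Cn n) := ⟨rfl⟩
noncomputable instance (n : ℕ) : MeasureSpace (Cn n) := ⟨MeasureTheory.Measure.addHaar⟩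

def B (n : ℕ) : Set (Cn n) := Metric.ball 0 1

def bdot {n : ℕ} (z w : Cn n) : ℂ := ∑ j, z j * (starRingEnd ℂ) (w j)

def vol (n : ℕ) (α : ℝ) : Measure (Cn n) :=
  (volume.restrict (B n)).withDensity fun z => ENNReal.ofReal ((1 - ‖z‖ ^ 2) ^ α)

def Hol {n : ℕ} (f : Cn n → ℂ) : Prop := DifferentiableOn ℂ f (B n)

def bNorm (n : ℕ) (p α : ℝ) (f : Cn n → ℂ) : ℝ :=
  (∫ z, ‖f z‖ ^ p ∂(vol n α)) ^ (1 / p)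

def InBergman (n : ℕ) (p α : ℝ) (f : Cn n → ℂ) : Prop :=
  Hol f ∧ Integrable (fun z => ‖f z‖ ^ p) (vol n α)

def rderiv {n : ℕ} (f : Cn n → ℂ) (z : Cn n) : ℂ := fderiv ℂ f z z

def mob {n : ℕ} (a z : Cn n) : ℝ :=
  (1 - ‖a‖ ^ 2) * (1 - ‖z‖ ^ 2) / ‖(1 : ℂ) - bdot z a‖ ^ 2

def rho {n : ℕ} (z w : Cn n) : ℝ := Real.sqrt (1 - mob z w)

def bergDist {n : ℕ} (z w : Cn n) : ℝ :=
  (1 / 2) * Real.log ((1 + rho z w) / (1 - rho z w))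

def bergBall {n : ℕ} (a : Cn n) (r : ℝ) : Set (Cn n) := {w ∈ B n | bergDist a w < r}

def IsCarleson (n : ℕ) (lam γ : ℝ) (μ : Measure (Cn n)) : Prop :=
  ∀ p q : ℝ, 0 < p → 0 < q → q / p = lam →
    ∃ C > 0, ∀ f : Cn n → ℂ, InBergman n p γ f →
      ∫ z, ‖f z‖ ^ q ∂μ ≤ C * bNorm n p γ f ^ q

def blochSet (n : ℕ) (α : ℝ) (f : Cn n → ℂ) : Set ℝ :=
  {x | ∃ z ∈ B n, x = ‖rderiv f z‖ * (1 - ‖z‖ ^ 2) ^ α}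

def blochNorm (n : ℕ) (α : ℝ) (f : Cn n → ℂ) : ℝ := sSup (blochSet n α f)

def InBloch (n : ℕ) (α : ℝ) (f : Cn n → ℂ) : Prop :=
  Hol f ∧ BddAbove (blochSet n α f)

def Fint (n : ℕ) (p q s : ℝ) (f : Cn n → ℂ) (a : Cn n) : ℝ :=
  ∫ z in B n, ‖rderiv f z‖ ^ p * (1 - ‖z‖ ^ 2) ^ q * mob a z ^ s

def FSet (n : ℕ) (p q s : ℝ) (f : Cn n → ℂ) : Set ℝ :=
  {x | ∃ a ∈ B n, x = Fint n p q s f a}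

def FNorm (n : ℕ) (p q s : ℝ) (f : Cn n → ℂ) : ℝ := sSup (FSet n p q s f) ^ (1 / p)

def InF (n : ℕ) (p q s : ℝ) (f : Cn n → ℂ) : Prop :=
  Hol f ∧ BddAbove (FSet n p q s f)

def toeplitz (n : ℕ) (β : ℝ) (μ : Measure (Cn n)) (f : Cn n → ℂ) (z : Cn n) : ℂ :=
  ∫ w, f w / ((1 : ℂ) - bdot z w) ^ ((((n : ℝ) + 1 + β : ℝ)) : ℂ) ∂μ

def carlSet (n : ℕ) (p q γ : ℝ) (μ : Measure (Cn n)) : Set ℝ :=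
  {x | ∃ f : Cn n → ℂ, InBergman n p γ f ∧ bNorm n p γ f ≤ 1 ∧ x = ∫ z, ‖f z‖ ^ q ∂μ}

instance isAddHaarMeasure_volume_Cn (n : ℕ) : (volume : Measure (Cn n)).IsAddHaarMeasure :=
  inferInstanceAs (Measure.IsAddHaarMeasure Measure.addHaar)

lemma bdot_eq_inner {n : ℕ} (z a : Cn n) : bdot z a = inner ℂ a z := by
  simp [bdot, PiLp.inner_apply]

/-- The parametrization of `ℂ^m × ℝ × ℝ` onto a complex space of dimension `m + 1`
determined by a vector `e` and a map `J` onto its orthogonal complement. -/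
def slabMap {m : ℕ} (e : Cn (m + 1)) (J : Cn m →ₗ[ℝ] Cn (m + 1)) :
    (Cn m × ℝ) × ℝ →ₗ[ℝ] Cn (m + 1) where
  toFun p := ((p.2 : ℂ) + p.1.2 * Complex.I) • e + J p.1.1
  map_add' p q := by
    simp only [Prod.fst_add, Prod.snd_add, map_add, Complex.ofReal_add]
    module
  map_smul' c p := by
    simp only [Prod.smul_fst, Prod.smul_snd, map_smul, smul_eq_mul, Complex.ofReal_mul,
      RingHom.id_apply, smul_add]
    rw [← Complex.coe_smul c (_ • e), smul_smul]
    congr 2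
    ring

lemma exists_slab_coordinates {m : ℕ} (e : Cn (m + 1)) (he : ‖e‖ = 1) :
    ∃ Φ : ((Cn m × ℝ) × ℝ) ≃L[ℝ] Cn (m + 1), ∀ w y x,
      inner ℂ e (Φ ((w, y), x)) = (x : ℂ) + y * Complex.I ∧
      ‖Φ ((w, y), x)‖ ^ 2 = x ^ 2 + y ^ 2 + ‖w‖ ^ 2 := by
  have : Fact (Module.finrank ℂ (Cn (m + 1)) = m + 1) := ⟨by simp⟩
  have he0 : e ≠ 0 := by rintro rfl; simp at he
  let J₀ : Cn m →ₗᵢ[ℂ] Cn (m + 1) := (Submodule.subtypeₗᵢ _).comp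
    (OrthonormalBasis.fromOrthogonalSpanSingleton (𝕜 := ℂ) m he0).repr.symm.toLinearIsometry
  have hJ : ∀ w, inner ℂ e (J₀ w) = 0 := fun w =>
    Submodule.mem_orthogonal_singleton_iff_inner_right.1
      ((OrthonormalBasis.fromOrthogonalSpanSingleton (𝕜 := ℂ) m he0).repr.symm w).2
  have hin : ∀ w y x, inner ℂ e (slabMap e (J₀.toLinearMap.restrictScalars ℝ) ((w, y), x))
      = (x : ℂ) + y * Complex.I := by
    intro w y x
    change inner ℂ e (((x : ℂ) + y * Complex.I) • e + J₀ w) = _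
    rw [inner_add_right, inner_smul_right, hJ, inner_self_eq_norm_sq_to_K, he]
    simp
  have hno : ∀ w y x, ‖slabMap e (J₀.toLinearMap.restrictScalars ℝ) ((w, y), x)‖ ^ 2
      = x ^ 2 + y ^ 2 + ‖w‖ ^ 2 := by
    intro w y x
    change ‖((x : ℂ) + y * Complex.I) • e + J₀ w‖ ^ 2 = _
    have h0 : inner ℂ (((x : ℂ) + y * Complex.I) • e) (J₀ w) = 0 := by
      rw [inner_smul_left, hJ, mul_zero]
    have := norm_add_sq_eq_norm_sq_add_norm_sq_of_inner_eq_zero _ _ h0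
    rw [sq, this, norm_smul, he, J₀.norm_map, mul_one, ← sq, ← sq, ← Complex.normSq_eq_norm_sq,
      Complex.normSq_add_mul_I]
  have hinj : Function.Injective (slabMap e (J₀.toLinearMap.restrictScalars ℝ)) := by
    rw [← LinearMap.ker_eq_bot, LinearMap.ker_eq_bot']
    rintro ⟨⟨w, y⟩, x⟩ h
    have h1 := hno w y x
    rw [h] at h1
    simp only [norm_zero] at h1
    have hx : x = 0 := by nlinarith [sq_nonneg x, sq_nonneg y, sq_nonneg ‖w‖]
    have hy : y = 0 := by nlinarith [sq_nonneg x, sq_nonneg y, sq_nonneg ‖w‖]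
    have hw : ‖w‖ = 0 := by nlinarith [sq_nonneg x, sq_nonneg y, sq_nonneg ‖w‖]
    rw [norm_eq_zero] at hw
    simp [hx, hy, hw]
  have hfin : Module.finrank ℝ ((Cn m × ℝ) × ℝ) = Module.finrank ℝ (Cn (m + 1)) := by
    rw [finrank_real_of_complex (Cn (m + 1)), Module.finrank_prod, Module.finrank_prod,
      finrank_real_of_complex (Cn m)]
    simp; ring
  exact ⟨(LinearMap.linearEquivOfInjective _ hinj hfin).toContinuousLinearEquiv,
    fun w y x => ⟨hin w y x, hno w y x⟩⟩

lemma exists_uniform_slab_coordinates (m : ℕ) :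
    ∃ K : ENNReal, K ≠ ⊤ ∧ ∀ e : Cn (m + 1), ‖e‖ = 1 →
      ∃ Φ : (Cn m × ℝ) × ℝ → Cn (m + 1),
        (∀ w y x, inner ℂ e (Φ ((w, y), x)) = (x : ℂ) + y * Complex.I ∧
          ‖Φ ((w, y), x)‖ ^ 2 = x ^ 2 + y ^ 2 + ‖w‖ ^ 2) ∧
        ∀ G : Cn (m + 1) → ENNReal, ∫⁻ z, G z = K * ∫⁻ p, G (Φ p) := by
  have key : ∀ e : Cn (m + 1), ‖e‖ = 1 →
      ∃ Φ : (Cn m × ℝ) × ℝ → Cn (m + 1), ∃ K : ENNReal, K ≠ ⊤ ∧ K ≠ 0 ∧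
        (∀ w y x, inner ℂ e (Φ ((w, y), x)) = (x : ℂ) + y * Complex.I ∧
          ‖Φ ((w, y), x)‖ ^ 2 = x ^ 2 + y ^ 2 + ‖w‖ ^ 2) ∧
        ∀ G : Cn (m + 1) → ENNReal, ∫⁻ z, G z = K * ∫⁻ p, G (Φ p) := by
    intro e he
    obtain ⟨Φ, hΦ⟩ := exists_slab_coordinates e he
    have : (volume : Measure (Cn m × ℝ)).IsAddHaarMeasure := Measure.prod.instIsAddHaarMeasure _ _
    have : (volume : Measure ((Cn m × ℝ) × ℝ)).IsAddHaarMeasure :=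
      Measure.prod.instIsAddHaarMeasure _ _
    have := Φ.isAddHaarMeasure_map (volume : Measure ((Cn m × ℝ) × ℝ))
    have hK := Measure.isAddLeftInvariant_eq_smul (volume : Measure (Cn (m + 1)))
      (Measure.map Φ (volume : Measure ((Cn m × ℝ) × ℝ)))
    refine ⟨Φ, Measure.addHaarScalarFactor (volume : Measure (Cn (m + 1)))
      (Measure.map Φ (volume : Measure ((Cn m × ℝ) × ℝ))), ENNReal.coe_ne_top, ?_, hΦ, ?_⟩
    · exact ENNReal.coe_ne_zero.2 (Measure.addHaarScalarFactor_pos_of_isAddHaarMeasure _ _).ne'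
    · intro G
      conv_lhs => rw [hK]
      rw [lintegral_smul_measure]
      congr 1
      exact lintegral_map_equiv G Φ.toHomeomorph.toMeasurableEquiv
  let D : Set ((Cn m × ℝ) × ℝ) := {p | p.2 ^ 2 + p.1.2 ^ 2 + ‖p.1.1‖ ^ 2 < 1}
  have hball : ∀ (e : Cn (m + 1)) (Φ : (Cn m × ℝ) × ℝ → Cn (m + 1)) (K : ENNReal),
      (∀ w y x, inner ℂ e (Φ ((w, y), x)) = (x : ℂ) + y * Complex.I ∧
          ‖Φ ((w, y), x)‖ ^ 2 = x ^ 2 + y ^ 2 + ‖w‖ ^ 2) →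
      (∀ G : Cn (m + 1) → ENNReal, ∫⁻ z, G z = K * ∫⁻ p, G (Φ p)) →
      volume (Metric.ball (0 : Cn (m + 1)) 1) = K * volume D := by
    intro e Φ K h1 h2
    have hD : MeasurableSet D := (isOpen_lt (by fun_prop) continuous_const).measurableSet
    rw [← lintegral_indicator_one Metric.isOpen_ball.measurableSet, h2,
      ← lintegral_indicator_one hD]
    congr 2
    ext ⟨⟨w, y⟩, x⟩
    have : Φ ((w, y), x) ∈ Metric.ball 0 1 ↔ ((w, y), x) ∈ D := by
      rw [mem_ball_zero_iff, ← sq_lt_one_iff₀ (norm_nonneg _), (h1 w y x).2]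
      rfl
    simp only [Set.indicator, this, Pi.one_apply]
  have hb0 : volume (Metric.ball (0 : Cn (m + 1)) 1) ≠ 0 :=
    (Metric.measure_ball_pos volume 0 one_pos).ne'
  have hbt : volume (Metric.ball (0 : Cn (m + 1)) 1) ≠ ⊤ := measure_ball_lt_top.ne
  have hKeq : ∀ K : ENNReal, K ≠ ⊤ → K ≠ 0 →
      volume (Metric.ball (0 : Cn (m + 1)) 1) = K * volume D →
      K = volume (Metric.ball (0 : Cn (m + 1)) 1) / volume D := by
    intro K ht h0 h
    have hD0 : volume D ≠ 0 := by
      intro h'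
      rw [h', mul_zero] at h
      exact hb0 h
    have hDt : volume D ≠ ⊤ := by
      intro h'
      rw [h', ENNReal.mul_top h0] at h
      exact hbt h
    rw [h, ENNReal.mul_div_cancel_right hD0 hDt]
  refine ⟨volume (Metric.ball (0 : Cn (m + 1)) 1) / volume D, ?_, ?_⟩
  · obtain ⟨Φ, K, hKt, hK0, h1, h2⟩ := key (EuclideanSpace.single 0 1) (by simp)
    rwa [← hKeq K hKt hK0 (hball _ Φ K h1 h2)]
  · intro e he
    obtain ⟨Φ, K, hKt, hK0, h1, h2⟩ := key e he
    refine ⟨Φ, h1, ?_⟩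
    rwa [← hKeq K hKt hK0 (hball _ Φ K h1 h2)]

lemma lintegral_comp_inv_smul {E : Type*} [NormedAddCommGroup E] [NormedSpace ℝ E]
    [FiniteDimensional ℝ E] [MeasurableSpace E] [BorelSpace E] (μ : Measure E)
    [μ.IsAddHaarMeasure] {ε : ℝ} (hε : 0 < ε) (F : E → ENNReal) :
    ∫⁻ x, F (ε⁻¹ • x) ∂μ = ENNReal.ofReal (ε ^ Module.finrank ℝ E) * ∫⁻ x, F x ∂μ := by
  have h := lintegral_map_equiv (μ := μ) F
    (Homeomorph.smulOfNeZero ε⁻¹ (inv_ne_zero hε.ne')).toMeasurableEquiv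
  change ∫⁻ a, F a ∂Measure.map (fun x => ε⁻¹ • x) μ = ∫⁻ x, F (ε⁻¹ • x) ∂μ at h
  rw [← h, Measure.map_addHaar_smul μ (inv_ne_zero hε.ne'), lintegral_smul_measure]
  rw [← inv_pow, inv_inv, abs_of_pos (by positivity), smul_eq_mul]

lemma ball_weight_lintegral_lt_top (m : ℕ) {α : ℝ} (hα : -1 < α) :
    ∫⁻ z in B (m + 1), ENNReal.ofReal ((1 - ‖z‖ ^ 2) ^ α) < ⊤ := by
  have h1 : IntervalIntegrable (fun r : ℝ => (1 - r) ^ α) volume 0 1 := by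
    have := (intervalIntegral.intervalIntegrable_rpow' (a := 0) (b := 1) hα).comp_sub_left 1
    simpa using this.symm
  have h2 : IntegrableOn (fun r : ℝ => r ^ (Module.finrank ℝ (Cn (m + 1)) - 1) •
      (Set.Iio (1 : ℝ)).indicator (fun r => (1 - r ^ 2) ^ α) r) (Set.Ioi 0) := by
    have h3 : IntegrableOn (fun r : ℝ => (r ^ (Module.finrank ℝ (Cn (m + 1)) - 1) * (1 + r) ^ α) *
        (1 - r) ^ α) (Set.Icc 0 1) := by
      refine IntegrableOn.continuousOn_mul ?_ ?_ isCompact_Icc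
      · refine ContinuousOn.mul (by fun_prop) (ContinuousOn.rpow_const (by fun_prop) ?_)
        intro x hx
        left
        have := hx.1
        positivity
      · rwa [integrableOn_Icc_iff_integrableOn_Ioc,
          ← intervalIntegrable_iff_integrableOn_Ioc_of_le zero_le_one]
    have h4 : IntegrableOn (fun r : ℝ => (r ^ (Module.finrank ℝ (Cn (m + 1)) - 1) * (1 + r) ^ α) *
        (1 - r) ^ α) (Set.Ioi 0 ∩ Set.Iio 1) := h3.mono_set (fun x hx => ⟨hx.1.le, hx.2.le⟩)
    rw [Set.inter_comm] at h4
    have h5 := (integrable_indicator_iff measurableSet_Iio).2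
      (by rwa [IntegrableOn, ← Measure.restrict_restrict measurableSet_Iio] at h4)
    refine IntegrableOn.congr_fun h5 ?_ measurableSet_Ioi
    intro r hr
    simp only [Set.indicator, smul_eq_mul]
    split_ifs with h
    · rw [mul_assoc, ← Real.mul_rpow (by linarith [hr.out]) (by linarith [h.out])]
      ring_nf
    · simp
  have h3 := (integrable_fun_norm_addHaar (volume : Measure (Cn (m + 1)))).2 h2
  rw [B, ← lintegral_indicator Metric.isOpen_ball.measurableSet]
  convert h3.lintegral_lt_top using 3 with z
  by_cases h : ‖z‖ < 1
  · rw [Set.indicator_of_mem (by simpa using h), Set.indicator_of_mem (by simpa using h)]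
  · rw [Set.indicator_of_notMem (by simpa using h), Set.indicator_of_notMem (by simpa using h)]
    simp

lemma lintegral_inner_profile_lt_top {α : ℝ} (hα : -1 < α) :
    ∫⁻ v : ℝ, (Set.Ioi (0 : ℝ)).indicator
      (fun v => ENNReal.ofReal (v ^ α * (1 + v) ^ (-(α + 2)))) v < ⊤ := by
  rw [lintegral_indicator measurableSet_Ioi]
  refine IntegrableOn.setLIntegral_lt_top (f := fun v : ℝ => v ^ α * (1 + v) ^ (-(α + 2))) ?_
  rw [← Set.Ioc_union_Ioi_eq_Ioi zero_le_one]
  refine IntegrableOn.union ?_ ?_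
  · rw [← integrableOn_Icc_iff_integrableOn_Ioc]
    refine IntegrableOn.mul_continuousOn ?_ ?_ isCompact_Icc
    · rw [integrableOn_Icc_iff_integrableOn_Ioc,
        ← intervalIntegrable_iff_integrableOn_Ioc_of_le zero_le_one]
      exact intervalIntegral.intervalIntegrable_rpow' hα
    · refine ContinuousOn.rpow_const (by fun_prop) ?_
      intro x hx
      left
      have := hx.1
      positivity
  · refine Integrable.mono' (integrableOn_Ioi_rpow_of_lt (a := -2) (by norm_num) one_pos)
      (by fun_prop) ?_
    refine (ae_restrict_iff' measurableSet_Ioi).2 (Filter.Eventually.of_forall fun v hv => ?_)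
    have hv0 : (0 : ℝ) < v := lt_trans one_pos hv
    rw [Real.norm_of_nonneg (by positivity)]
    calc v ^ α * (1 + v) ^ (-(α + 2)) ≤ v ^ α * v ^ (-(α + 2)) := by
          gcongr v ^ α * ?_
          exact Real.rpow_le_rpow_of_nonpos hv0 (by linarith) (by linarith)
      _ = v ^ (-2 : ℝ) := by rw [← Real.rpow_add hv0]; ring_nf

lemma norm_one_sub_mul_bounds {r x y W : ℝ} (hr : 1 / 2 ≤ r) (hr1 : r < 1) (hW : 0 ≤ W)
    (h : x ^ 2 + y ^ 2 + W < 1) :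
    1 - r * x ≤ ‖(1 : ℂ) - r * (x + y * Complex.I)‖ ∧
    (1 - r ^ 2) ≤ 2 * ‖(1 : ℂ) - r * (x + y * Complex.I)‖ ∧
    (1 - r ^ 2) + |y| ≤ 4 * ‖(1 : ℂ) - r * (x + y * Complex.I)‖ ∧
    (1 - r ^ 2) + W ≤ 4 * ‖(1 : ℂ) - r * (x + y * Complex.I)‖ := by
  set d := ‖(1 : ℂ) - r * (x + y * Complex.I)‖ with hd
  have h1 : 1 - r * x ≤ d := by
    have := (le_abs_self _).trans (Complex.abs_re_le_norm ((1 : ℂ) - r * (x + y * Complex.I)))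
    simpa using this
  have h2 : r * |y| ≤ d := by
    have := Complex.abs_im_le_norm ((1 : ℂ) - r * (x + y * Complex.I))
    simpa [abs_mul, abs_of_nonneg (by linarith : (0 : ℝ) ≤ r)] using this
  set s := ‖(x : ℂ) + y * Complex.I‖ with hs
  have hs2 : s ^ 2 = x ^ 2 + y ^ 2 := by
    rw [hs, ← Complex.normSq_eq_norm_sq, Complex.normSq_add_mul_I]
  have hs0 : 0 ≤ s := norm_nonneg _
  have h3 : 1 - r * s ≤ d := by
    have := norm_sub_norm_le (1 : ℂ) (r * (x + y * Complex.I))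
    rwa [norm_one, norm_mul, Complex.norm_real, Real.norm_of_nonneg (by linarith)] at this
  have hs1 : s < 1 := by nlinarith
  have h4 : 1 - r ≤ d := by nlinarith
  have h5 : 1 - s ≤ d := by nlinarith
  have h6 : |y| ≤ 2 * d := by nlinarith [abs_nonneg y]
  refine ⟨h1, ?_, ?_, ?_⟩ <;> nlinarith

lemma rpow_div_le_of_add_le {δ d Y c : ℝ} (hδ : 0 < δ) (hd : 0 < d) (hY : 0 ≤ Y) (hc : 0 ≤ c)
    (h : δ + Y ≤ 4 * d) : (δ / d) ^ c ≤ 4 ^ c * (1 + Y / δ) ^ (-c) := by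
  have h1 : δ / d ≤ 4 / (1 + Y / δ) := by
    rw [div_le_div_iff₀ hd (by positivity)]
    field_simp
    linarith
  calc (δ / d) ^ c ≤ (4 / (1 + Y / δ)) ^ c := Real.rpow_le_rpow (by positivity) h1 hc
    _ = _ := by rw [Real.div_rpow (by norm_num) (by positivity), Real.rpow_neg (by positivity)]; rfl

lemma rpow_le_two_rpow_abs {u α : ℝ} (hu : 1 / 2 ≤ u) (hu2 : u ≤ 2) : u ^ α ≤ 2 ^ |α| := by
  rcases le_total 0 α with h | h
  · rw [abs_of_nonneg h]
    exact Real.rpow_le_rpow (by linarith) hu2 h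
  · rw [abs_of_nonpos h, Real.rpow_neg (by norm_num), ← Real.inv_rpow (by norm_num)]
    exact Real.rpow_le_rpow_of_nonpos (by norm_num) (by linarith) h

lemma near_boundary_bound (m : ℕ) {α p r x y W : ℝ} (hα : -1 < α) (hp : m + α + 5 ≤ p)
    (hr : 1 / 2 ≤ r) (hr1 : r < 1) (hW : 0 ≤ W) (h : x ^ 2 + y ^ 2 + W < 1) (hx : 1 / 2 ≤ x) :
    0 < √(1 - y ^ 2 - W) - x ∧
    (1 - (x ^ 2 + y ^ 2 + W)) ^ α *
      ((1 - r ^ 2) / ‖(1 : ℂ) - r * (x + y * Complex.I)‖) ^ p ≤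
    2 ^ |α| * 2 ^ (p - (m + α + 5)) * 4 ^ ((m : ℝ) + α + 5) * (1 - r ^ 2) ^ α *
      ((1 + W / (1 - r ^ 2)) ^ (-((m : ℝ) + 1)) * (1 + |y| / (1 - r ^ 2)) ^ (-2 : ℝ)) *
      (((√(1 - y ^ 2 - W) - x) / (1 - r ^ 2)) ^ α *
        (1 + (√(1 - y ^ 2 - W) - x) / (1 - r ^ 2)) ^ (-(α + 2))) := by
  obtain ⟨h1, h2, h3, h4⟩ := norm_one_sub_mul_bounds hr hr1 hW h
  set d := ‖(1 : ℂ) - r * (x + y * Complex.I)‖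
  set δ := 1 - r ^ 2 with hδ
  have hδ0 : 0 < δ := by nlinarith
  have hd0 : 0 < d := by linarith
  set A := √(1 - y ^ 2 - W)
  have hA2 : A ^ 2 = 1 - y ^ 2 - W := Real.sq_sqrt (by nlinarith)
  have hA0 : 0 ≤ A := Real.sqrt_nonneg _
  have hA1 : A ≤ 1 := by nlinarith [sq_nonneg y]
  have hV : 0 < A - x := by nlinarith
  refine ⟨hV, ?_⟩
  have h5 : δ + (A - x) ≤ 4 * d := by nlinarith
  have hw : (1 - (x ^ 2 + y ^ 2 + W)) ^ α ≤ 2 ^ |α| * (δ ^ α * ((A - x) / δ) ^ α) := by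
    have : 1 - (x ^ 2 + y ^ 2 + W) = (A + x) * (A - x) := by nlinarith
    rw [this, Real.mul_rpow (by linarith) hV.le, ← Real.mul_rpow hδ0.le (by positivity),
      mul_div_cancel₀ _ hδ0.ne']
    gcongr
    exact rpow_le_two_rpow_abs (by linarith) (by linarith)
  have hT : 0 < δ / d := by positivity
  have hT2 : δ / d ≤ 2 := by rwa [div_le_iff₀ hd0]
  have e1 := rpow_div_le_of_add_le (c := (m : ℝ) + 1) hδ0 hd0 hW (by positivity) h4
  have e2 := rpow_div_le_of_add_le (c := 2) hδ0 hd0 (abs_nonneg y) (by positivity) h3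
  have e3 := rpow_div_le_of_add_le (c := α + 2) hδ0 hd0 hV.le (by linarith) h5
  have e0 : (δ / d) ^ (p - (m + α + 5)) ≤ 2 ^ (p - (m + α + 5)) :=
    Real.rpow_le_rpow hT.le hT2 (by linarith)
  have es : (δ / d) ^ p = (δ / d) ^ (p - (m + α + 5)) *
      ((δ / d) ^ ((m : ℝ) + 1) * (δ / d) ^ (2 : ℝ) * (δ / d) ^ (α + 2)) := by
    rw [← Real.rpow_add hT, ← Real.rpow_add hT, ← Real.rpow_add hT]
    ring_nf
  have e4 : (4 : ℝ) ^ ((m : ℝ) + α + 5) = 4 ^ ((m : ℝ) + 1) * 4 ^ (2 : ℝ) * 4 ^ (α + 2) := by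
    rw [← Real.rpow_add (by norm_num), ← Real.rpow_add (by norm_num)]
    ring_nf
  have hW' : 0 < 1 + W / δ := by positivity
  have hY' : 0 < 1 + |y| / δ := by positivity
  have hV' : 0 < 1 + (A - x) / δ := by positivity
  rw [es, e4]
  calc _ ≤ (2 ^ |α| * (δ ^ α * ((A - x) / δ) ^ α)) * (2 ^ (p - (m + α + 5)) *
        ((4 ^ ((m : ℝ) + 1) * (1 + W / δ) ^ (-((m : ℝ) + 1))) *
        (4 ^ (2 : ℝ) * (1 + |y| / δ) ^ (-2 : ℝ)) * (4 ^ (α + 2) *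
        (1 + (A - x) / δ) ^ (-(α + 2))))) := by gcongr
    _ = _ := by ring

/-- The local kernel integral estimate of Forelli–Rudin type. -/
lemma kernel_lintegral_le (m : ℕ) {α p : ℝ} (hα : -1 < α) (hp : m + α + 5 ≤ p) :
    ∃ K : ENNReal, K ≠ ⊤ ∧ ∀ a ∈ B (m + 1), 1 / 2 ≤ ‖a‖ →
      ∫⁻ z in B (m + 1), ENNReal.ofReal ((1 - ‖z‖ ^ 2) ^ α) *
        ENNReal.ofReal (((1 - ‖a‖ ^ 2) / ‖(1 : ℂ) - bdot z a‖) ^ p) ≤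
      K * ENNReal.ofReal ((1 - ‖a‖ ^ 2) ^ ((m : ℝ) + 2 + α)) := by
  obtain ⟨K₀, hK₀, hΦ⟩ := exists_uniform_slab_coordinates m
  set f₁ : Cn m → ENNReal := fun w => ENNReal.ofReal ((1 + ‖w‖ ^ 2) ^ (-((m : ℝ) + 1))) with hf₁
  set f₂ : ℝ → ENNReal := fun y => ENNReal.ofReal ((1 + ‖y‖) ^ (-2 : ℝ)) with hf₂
  set H : ℝ → ENNReal := (Set.Ioi (0 : ℝ)).indicator
      (fun v => ENNReal.ofReal (v ^ α * (1 + v) ^ (-(α + 2)))) with hH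
  set c : ℝ := 2 ^ |α| * 2 ^ (p - (m + α + 5)) * 4 ^ ((m : ℝ) + α + 5) with hc
  have hc0 : 0 ≤ c := by positivity
  have hI₁ : ∫⁻ w, f₁ w ≠ ⊤ := by
    have := (integrable_rpow_neg_one_add_norm_sq (E := Cn m) (μ := volume)
      (r := 2 * ((m : ℝ) + 1)) (by
        rw [finrank_real_of_complex]; simp)).lintegral_lt_top.ne
    convert this using 5
    ring
  have hI₂ : ∫⁻ y, f₂ y ≠ ⊤ :=
    (integrable_one_add_norm (E := ℝ) (μ := volume) (r := 2) (by simp)).lintegral_lt_top.ne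
  have hI₃ : ∫⁻ v, H v ≠ ⊤ := (lintegral_inner_profile_lt_top hα).ne
  have hI₀ := (ball_weight_lintegral_lt_top m hα).ne
  set I₀ := ∫⁻ z in B (m + 1), ENNReal.ofReal ((1 - ‖z‖ ^ 2) ^ α) with hI₀def
  refine ⟨ENNReal.ofReal (2 ^ p) * I₀ +
    K₀ * (ENNReal.ofReal c * (∫⁻ v, H v) * (∫⁻ w, f₁ w) * (∫⁻ y, f₂ y)), ?_, ?_⟩
  · finiteness
  intro a ha hra
  set r := ‖a‖ with hr
  have hr1 : r < 1 := by simpa [B] using ha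
  set δ := 1 - r ^ 2 with hδ
  have hδ0 : 0 < δ := by nlinarith
  have hδ1 : δ ≤ 1 := by nlinarith
  set e : Cn (m + 1) := ((r⁻¹ : ℝ) : ℂ) • a with he
  have hae : a = (r : ℂ) • e := by
    rw [he, smul_smul, ← Complex.ofReal_mul, mul_inv_cancel₀ (by linarith), Complex.ofReal_one,
      one_smul]
  have hen : ‖e‖ = 1 := by
    rw [he, norm_smul, Complex.norm_real, Real.norm_of_nonneg (by positivity), ← hr,
      inv_mul_cancel₀ (by linarith)]
  obtain ⟨Φ, hΦ1, hΦ2⟩ := hΦ e hen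
  have hBm : MeasurableSet (B (m + 1)) := Metric.isOpen_ball.measurableSet
  have hdot : ∀ z, bdot z a = r * inner ℂ e z := by
    intro z
    rw [bdot_eq_inner, hae, inner_smul_left, Complex.conj_ofReal]
  set G : Cn (m + 1) → ENNReal := fun z => ENNReal.ofReal ((1 - ‖z‖ ^ 2) ^ α) *
        ENNReal.ofReal ((δ / ‖(1 : ℂ) - bdot z a‖) ^ p) with hG
  set S : Set (Cn (m + 1)) := {z | 1 / 2 ≤ (inner ℂ e z).re} with hS
  set G₁ : Cn (m + 1) → ENNReal := (B (m + 1)).indicator fun z =>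
    ENNReal.ofReal (2 ^ p * δ ^ ((m : ℝ) + 2 + α)) * ENNReal.ofReal ((1 - ‖z‖ ^ 2) ^ α) with hG₁
  have hsplit : ∀ z, (B (m + 1)).indicator G z ≤ G₁ z + (B (m + 1) ∩ S).indicator G z := by
    intro z
    by_cases hz : z ∈ B (m + 1)
    · by_cases hzS : z ∈ S
      · rw [Set.indicator_of_mem hz, Set.indicator_of_mem (show z ∈ B (m + 1) ∩ S from ⟨hz, hzS⟩)]
        exact le_add_self
      · refine le_trans ?_ le_self_add
        rw [hG₁, Set.indicator_of_mem hz, Set.indicator_of_mem hz, hG]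
        dsimp only
        rw [mul_comm (ENNReal.ofReal (2 ^ p * _))]
        gcongr
        have hre : 1 / 2 ≤ ‖(1 : ℂ) - bdot z a‖ := by
          refine le_trans ?_ ((le_abs_self _).trans (Complex.abs_re_le_norm _))
          have : (inner ℂ e z).re < 1 / 2 := not_le.1 hzS
          rw [hdot]
          simp only [Complex.sub_re, Complex.one_re, Complex.re_ofReal_mul]
          nlinarith
        have hp0 : 0 ≤ p := by have := Nat.cast_nonneg (α := ℝ) m; linarith
        calc (δ / ‖(1 : ℂ) - bdot z a‖) ^ p ≤ (2 * δ) ^ p := by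
              refine Real.rpow_le_rpow (by positivity) ?_ hp0
              rw [div_le_iff₀ (by linarith)]
              nlinarith
          _ = 2 ^ p * δ ^ p := Real.mul_rpow (by norm_num) hδ0.le
          _ ≤ 2 ^ p * δ ^ ((m : ℝ) + 2 + α) := by
              gcongr 2 ^ p * ?_
              exact Real.rpow_le_rpow_of_exponent_ge hδ0 hδ1 (by linarith)
    · rw [Set.indicator_of_notMem hz]
      exact zero_le
  have hG₁m : Measurable G₁ := Measurable.indicator (by fun_prop) hBm
  have hfirst : ∫⁻ z, G₁ z = ENNReal.ofReal (2 ^ p) * I₀ *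
      ENNReal.ofReal (δ ^ ((m : ℝ) + 2 + α)) := by
    rw [hG₁, lintegral_indicator hBm, lintegral_const_mul' _ _ ENNReal.ofReal_ne_top,
      ENNReal.ofReal_mul (by positivity), ← hI₀def]
    ring
  have hpt : ∀ q : (Cn m × ℝ) × ℝ, (B (m + 1) ∩ S).indicator G (Φ q) ≤
      ENNReal.ofReal (c * δ ^ α) * (f₁ ((√δ)⁻¹ • q.1.1) * f₂ (δ⁻¹ • q.1.2)) *
        H (δ⁻¹ • (√(1 - q.1.2 ^ 2 - ‖q.1.1‖ ^ 2) - q.2)) := by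
    rintro ⟨⟨w, y⟩, x⟩
    obtain ⟨hin, hno⟩ := hΦ1 w y x
    by_cases hz : Φ ((w, y), x) ∈ B (m + 1) ∩ S
    · have hlt : x ^ 2 + y ^ 2 + ‖w‖ ^ 2 < 1 := by
        rw [← hno, sq_lt_one_iff₀ (norm_nonneg _)]
        simpa [B] using hz.1
      have hx : 1 / 2 ≤ x := by
        have := hz.2
        rw [hS, Set.mem_ofPred_eq, hin] at this
        simpa using this
      obtain ⟨hV, hb⟩ := near_boundary_bound m hα hp hra hr1 (sq_nonneg ‖w‖) hlt hx
      rw [Set.indicator_of_mem hz, hG]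
      simp only
      have hVp : δ⁻¹ • (√(1 - y ^ 2 - ‖w‖ ^ 2) - x) ∈ Set.Ioi (0 : ℝ) := by
        rw [smul_eq_mul, Set.mem_Ioi]; positivity
      rw [hno, hdot, hin, hH, Set.indicator_of_mem hVp, hf₁, hf₂]
      simp only
      rw [← ENNReal.ofReal_mul' (by positivity), ← ENNReal.ofReal_mul (by positivity),
        ← ENNReal.ofReal_mul (by positivity), ← ENNReal.ofReal_mul (by positivity)]
      refine ENNReal.ofReal_le_ofReal (hb.trans_eq ?_)
      rw [norm_smul, norm_smul, mul_pow, norm_inv, norm_inv, inv_pow,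
        Real.norm_of_nonneg (Real.sqrt_nonneg δ), Real.sq_sqrt hδ0.le,
        Real.norm_of_nonneg hδ0.le, Real.norm_eq_abs, smul_eq_mul]
      simp only [div_eq_inv_mul, hc, ← hδ]
    · rw [Set.indicator_of_notMem hz]
      exact zero_le
  have hinner : ∀ s : ℝ, ∫⁻ x : ℝ, H (δ⁻¹ • (s - x)) = ENNReal.ofReal δ * ∫⁻ v, H v := by
    intro s
    rw [lintegral_sub_left_eq_self (fun x => H (δ⁻¹ • x)) s, lintegral_comp_inv_smul _ hδ0]
    simp
  clear_value c
  have hsecond : ∫⁻ q : (Cn m × ℝ) × ℝ, (B (m + 1) ∩ S).indicator G (Φ q) ≤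
      (ENNReal.ofReal c * (∫⁻ v, H v) * (∫⁻ w, f₁ w) * (∫⁻ y, f₂ y)) *
        ENNReal.ofReal (δ ^ ((m : ℝ) + 2 + α)) := by
    have hpow : δ ^ ((m : ℝ) + 2 + α) = δ ^ α * δ * (√δ) ^ (2 * m) * δ := by
      rw [pow_mul, Real.sq_sqrt hδ0.le, add_right_comm, Real.rpow_add hδ0, Real.rpow_add hδ0,
        Real.rpow_natCast, Real.rpow_two]
      ring
    calc _ ≤ ∫⁻ q : (Cn m × ℝ) × ℝ, ENNReal.ofReal (c * δ ^ α) *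
            (f₁ ((√δ)⁻¹ • q.1.1) * f₂ (δ⁻¹ • q.1.2)) *
            H (δ⁻¹ • (√(1 - q.1.2 ^ 2 - ‖q.1.1‖ ^ 2) - q.2)) := lintegral_mono hpt
      _ ≤ ∫⁻ u : Cn m × ℝ, ∫⁻ x : ℝ, ENNReal.ofReal (c * δ ^ α) *
            (f₁ ((√δ)⁻¹ • u.1) * f₂ (δ⁻¹ • u.2)) *
            H (δ⁻¹ • (√(1 - u.2 ^ 2 - ‖u.1‖ ^ 2) - x)) := lintegral_prod_le _
      _ = ∫⁻ u : Cn m × ℝ, (ENNReal.ofReal (c * δ ^ α) * (ENNReal.ofReal δ * ∫⁻ v, H v)) *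
            (f₁ ((√δ)⁻¹ • u.1) * f₂ (δ⁻¹ • u.2)) := by
          refine lintegral_congr fun u => ?_
          rw [lintegral_const_mul' _ _ (by finiteness), hinner]
          ring
      _ = (ENNReal.ofReal (c * δ ^ α) * (ENNReal.ofReal δ * ∫⁻ v, H v)) *
            ∫⁻ u : Cn m × ℝ, (f₁ ((√δ)⁻¹ • u.1) * f₂ (δ⁻¹ • u.2)) :=
          lintegral_const_mul' _ _ (by finiteness)
      _ = (ENNReal.ofReal (c * δ ^ α) * (ENNReal.ofReal δ * ∫⁻ v, H v)) *
            ((∫⁻ w, f₁ ((√δ)⁻¹ • w)) * ∫⁻ y, f₂ (δ⁻¹ • y)) := by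
          congr 1
          exact lintegral_prod_mul (f := fun w => f₁ ((√δ)⁻¹ • w)) (g := fun y => f₂ (δ⁻¹ • y))
            (by fun_prop) (by fun_prop)
      _ = _ := by
          rw [lintegral_comp_inv_smul _ (Real.sqrt_pos.2 hδ0), lintegral_comp_inv_smul _ hδ0, hpow,
            finrank_real_of_complex, finrank_euclideanSpace_fin, Module.finrank_self, pow_one,
            ENNReal.ofReal_mul hc0, ENNReal.ofReal_mul (by positivity),
            ENNReal.ofReal_mul (by positivity), ENNReal.ofReal_mul (by positivity)]
          ring
  calc ∫⁻ z in B (m + 1), G z = ∫⁻ z, (B (m + 1)).indicator G z := (lintegral_indicator hBm _).symm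
    _ ≤ ∫⁻ z, (G₁ z + (B (m + 1) ∩ S).indicator G z) := lintegral_mono hsplit
    _ = (∫⁻ z, G₁ z) + ∫⁻ z, (B (m + 1) ∩ S).indicator G z := lintegral_add_left hG₁m _
    _ ≤ _ := by
        rw [hΦ2 ((B (m + 1) ∩ S).indicator G), hfirst, add_mul, mul_assoc K₀]
        gcongr

lemma norm_bdot_le {n : ℕ} (z a : Cn n) : ‖bdot z a‖ ≤ ‖z‖ * ‖a‖ := by
  rw [bdot_eq_inner, mul_comm]
  exact norm_inner_le_norm a z

lemma bdot_self {n : ℕ} (a : Cn n) : bdot a a = ((‖a‖ ^ 2 : ℝ) : ℂ) := by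
  rw [bdot_eq_inner, inner_self_eq_norm_sq_to_K]
  simp

lemma one_sub_bdot_ne_zero {n : ℕ} {z a : Cn n} (hz : z ∈ B n) (ha : a ∈ B n) :
    (1 : ℂ) - bdot z a ≠ 0 := by
  intro h
  have h1 := norm_bdot_le z a
  rw [← sub_eq_zero.1 h, norm_one] at h1
  have hz' : ‖z‖ < 1 := by simpa [B] using hz
  have ha' : ‖a‖ < 1 := by simpa [B] using ha
  nlinarith [norm_nonneg z, norm_nonneg a]

/-- Powers of the normalized kernel, taking the value `1` at the pole parameter `a`. -/
def testFun {n : ℕ} (a : Cn n) (k : ℕ) (z : Cn n) : ℂ :=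
  (((1 - ‖a‖ ^ 2 : ℝ) : ℂ) / (1 - bdot z a)) ^ k

lemma one_sub_norm_sq_pos {n : ℕ} {a : Cn n} (ha : a ∈ B n) : 0 < 1 - ‖a‖ ^ 2 := by
  have ha' : ‖a‖ < 1 := by simpa [B] using ha
  nlinarith [norm_nonneg a]

lemma testFun_self {n : ℕ} {a : Cn n} (ha : a ∈ B n) (k : ℕ) : testFun a k a = 1 := by
  have h : ((1 - ‖a‖ ^ 2 : ℝ) : ℂ) ≠ 0 := Complex.ofReal_ne_zero.2 (one_sub_norm_sq_pos ha).ne'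
  have h2 : (1 : ℂ) - bdot a a = ((1 - ‖a‖ ^ 2 : ℝ) : ℂ) := by rw [bdot_self]; push_cast; ring
  rw [testFun, h2, div_self h, one_pow]

lemma hasFDerivAt_testFun {n : ℕ} {a z : Cn n} (ha : a ∈ B n) (hz : z ∈ B n) (k : ℕ) :
    HasFDerivAt (testFun a k)
      ((k * (((1 - ‖a‖ ^ 2 : ℝ) : ℂ) / (1 - bdot z a)) ^ (k - 1) *
        (((1 - ‖a‖ ^ 2 : ℝ) : ℂ) / (1 - bdot z a) ^ 2)) • innerSL ℂ a) z := by
  have h0 := one_sub_bdot_ne_zero hz ha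
  have hs : HasDerivAt (fun u : ℂ => (((1 - ‖a‖ ^ 2 : ℝ) : ℂ) / (1 - u)) ^ k)
      (k * (((1 - ‖a‖ ^ 2 : ℝ) : ℂ) / (1 - bdot z a)) ^ (k - 1) *
        (((1 - ‖a‖ ^ 2 : ℝ) : ℂ) / (1 - bdot z a) ^ 2)) (innerSL ℂ a z) := by
    have h1 := ((hasDerivAt_const (innerSL ℂ a z) ((1 - ‖a‖ ^ 2 : ℝ) : ℂ)).div
      ((hasDerivAt_id (innerSL ℂ a z)).const_sub 1)
      (by simpa [bdot_eq_inner] using h0)).pow k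
    exact h1.congr_deriv (by simp [bdot_eq_inner])
  have := hs.comp_hasFDerivAt z (innerSL ℂ a).hasFDerivAt
  refine this.congr_of_eventuallyEq (Filter.Eventually.of_forall fun w => ?_)
  simp [testFun, bdot_eq_inner]

lemma hol_testFun {n : ℕ} {a : Cn n} (ha : a ∈ B n) (k : ℕ) : Hol (testFun a k) :=
  fun _ hz => (hasFDerivAt_testFun ha hz k).differentiableAt.differentiableWithinAt

lemma rderiv_mul_testFun_self {n : ℕ} {a : Cn n} (ha : a ∈ B n) (k : ℕ) {g : Cn n → ℂ}
    (hg : Hol g) : rderiv (fun z => g z * testFun a k z) a =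
      rderiv g a + g a * (k * ((‖a‖ ^ 2 / (1 - ‖a‖ ^ 2) : ℝ) : ℂ)) := by
  have hga : DifferentiableAt ℂ g a := (hg a ha).differentiableAt (Metric.isOpen_ball.mem_nhds ha)
  have h := hga.hasFDerivAt.mul (hasFDerivAt_testFun ha ha k)
  have h0 : ((1 - ‖a‖ ^ 2 : ℝ) : ℂ) ≠ 0 := Complex.ofReal_ne_zero.2 (one_sub_norm_sq_pos ha).ne'
  have h2 : (1 : ℂ) - bdot a a = ((1 - ‖a‖ ^ 2 : ℝ) : ℂ) := by rw [bdot_self]; push_cast; ring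
  have h3 : inner ℂ a a = ((‖a‖ ^ 2 : ℝ) : ℂ) := by rw [← bdot_eq_inner, bdot_self]
  have hf : fderiv ℂ (fun z => g z * testFun a k z) a = _ := h.fderiv
  rw [rderiv, rderiv, hf, testFun_self ha, h2, div_self h0, one_pow, Complex.ofReal_div]
  simp only [add_apply, smul_apply, innerSL_apply_apply,
    smul_eq_mul, h3, one_mul, mul_one]
  rw [add_comm]
  congr 2
  field_simp

lemma testFun_inBergman_and_bNorm_le (m : ℕ) {t α : ℝ} (ht : 0 < t) (hα : -1 < α) (k : ℕ)
    (hk : m + α + 5 ≤ k * t) :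
    ∃ K : ℝ, 0 ≤ K ∧ ∀ a ∈ B (m + 1), 1 / 2 ≤ ‖a‖ → InBergman (m + 1) t α (testFun a k) ∧
      bNorm (m + 1) t α (testFun a k) ≤ K * (1 - ‖a‖ ^ 2) ^ (((m : ℝ) + 2 + α) / t) := by
  obtain ⟨K, hK, h⟩ := kernel_lintegral_le m hα hk
  refine ⟨K.toReal ^ (1 / t), by positivity, fun a ha hra => ?_⟩
  have hδ := one_sub_norm_sq_pos ha
  have hBm : MeasurableSet (B (m + 1)) := Metric.isOpen_ball.measurableSet
  have hnorm : ∀ z, ‖testFun a k z‖ ^ t =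
      ((1 - ‖a‖ ^ 2) / ‖(1 : ℂ) - bdot z a‖) ^ ((k : ℝ) * t) := by
    intro z
    rw [testFun, norm_pow, norm_div, Complex.norm_real, Real.norm_of_nonneg hδ.le,
      Real.rpow_mul (by positivity), Real.rpow_natCast]
  have hint : ∫⁻ z, ENNReal.ofReal (‖testFun a k z‖ ^ t) ∂(vol (m + 1) α) ≤
      K * ENNReal.ofReal ((1 - ‖a‖ ^ 2) ^ ((m : ℝ) + 2 + α)) := by
    refine (lintegral_withDensity_le_lintegral_mul _ (by fun_prop) _).trans ?_
    refine le_trans (le_of_eq ?_) (h a ha hra)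
    refine lintegral_congr fun z => ?_
    rw [Pi.mul_apply, hnorm]
  have hmeas : AEStronglyMeasurable (fun z => ‖testFun a k z‖ ^ t) (vol (m + 1) α) := by
    have h1 : ContinuousOn (fun z => ‖testFun a k z‖ ^ t) (B (m + 1)) :=
      (hol_testFun ha k).continuousOn.norm.rpow_const fun _ _ => Or.inr ht.le
    exact (h1.aestronglyMeasurable hBm).mono_ac (withDensity_absolutelyContinuous _ _)
  have hI : Integrable (fun z => ‖testFun a k z‖ ^ t) (vol (m + 1) α) := by
    refine ⟨hmeas, ?_⟩
    rw [hasFiniteIntegral_iff_ofReal (Filter.Eventually.of_forall fun z => by positivity)]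
    exact hint.trans_lt (by finiteness)
  refine ⟨⟨hol_testFun ha k, hI⟩, ?_⟩
  rw [bNorm, integral_eq_lintegral_of_nonneg_ae
    (Filter.Eventually.of_forall fun z => by positivity) hmeas]
  calc _ ≤ (K * ENNReal.ofReal ((1 - ‖a‖ ^ 2) ^ ((m : ℝ) + 2 + α))).toReal ^ (1 / t) := by
        refine Real.rpow_le_rpow (by positivity) ?_ (by positivity)
        exact ENNReal.toReal_mono (by finiteness) hint
    _ = _ := by
        rw [ENNReal.toReal_mul, ENNReal.toReal_ofReal (by positivity),
          Real.mul_rpow (by positivity) (by positivity), ← Real.rpow_mul hδ.le, mul_one_div]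

theorem stmt10 (n : ℕ) (t β α : ℝ) (ht : 0 < t) (hα : -1 < α)
    (hβeq : β = 1 + ((n : ℝ) + 1 + α) / t) (g : Cn n → ℂ) (hg : Hol g)
    (C : ℝ) (hC : 0 < C)
    (hbdd : ∀ f : Cn n → ℂ, InBergman n t α f →
      InBloch n β (fun z => g z * f z) ∧
      ‖g 0 * f 0‖ + blochNorm n β (fun z => g z * f z) ≤ C * bNorm n t α f) :
    ∃ M, ∀ a ∈ B n, ‖g a‖ ≤ M := by
  have hsmall : ∃ M, ∀ a : Cn n, ‖a‖ ≤ 1 / 2 → ‖g a‖ ≤ M := by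
    have hsub : Metric.closedBall (0 : Cn n) (1 / 2) ⊆ B n :=
      Metric.closedBall_subset_ball (by norm_num)
    obtain ⟨M, hM⟩ := (isCompact_closedBall (0 : Cn n) (1 / 2)).exists_bound_of_continuousOn
      (hg.continuousOn.mono hsub)
    exact ⟨M, fun a ha => hM a (by simpa using ha)⟩
  obtain ⟨M₀, hM₀⟩ := hsmall
  rcases n with _ | m
  · exact ⟨M₀, fun a _ => hM₀ a (by rw [Subsingleton.elim a 0, norm_zero]; norm_num)⟩
  obtain ⟨k, hk⟩ := exists_nat_ge ((m + α + 5) / t)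
  rw [div_le_iff₀ ht] at hk
  obtain ⟨K₁, hK₁, h₁⟩ := testFun_inBergman_and_bNorm_le m ht hα k hk
  obtain ⟨K₂, hK₂, h₂⟩ := testFun_inBergman_and_bNorm_le m ht hα (k + 1)
    (hk.trans (by push_cast; nlinarith))
  have hrad : ∀ (j : ℕ) (K : ℝ), ∀ a ∈ B (m + 1), InBergman (m + 1) t α (testFun a j) →
      bNorm (m + 1) t α (testFun a j) ≤ K * (1 - ‖a‖ ^ 2) ^ (((m : ℝ) + 2 + α) / t) →
      ‖rderiv (fun z => g z * testFun a j z) a‖ * (1 - ‖a‖ ^ 2) ≤ C * K := by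
    intro j K a ha hB hN
    have hδ := one_sub_norm_sq_pos ha
    obtain ⟨⟨-, hbd⟩, hle⟩ := hbdd _ hB
    have hs : ‖rderiv (fun z => g z * testFun a j z) a‖ * (1 - ‖a‖ ^ 2) ^ β ≤
        blochNorm (m + 1) β (fun z => g z * testFun a j z) := le_csSup hbd ⟨a, ha, rfl⟩
    have hβ : β = 1 + ((m : ℝ) + 2 + α) / t := by rw [hβeq]; push_cast; ring
    rw [hβ, Real.rpow_add hδ, Real.rpow_one, ← mul_assoc, ← hβ] at hs
    have hpos : 0 < (1 - ‖a‖ ^ 2) ^ (((m : ℝ) + 2 + α) / t) := by positivity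
    refine le_of_mul_le_mul_right ?_ hpos
    have := mul_le_mul_of_nonneg_left hN hC.le
    linarith [norm_nonneg (g 0 * testFun a j 0)]
  refine ⟨max M₀ (4 * (C * K₁ + C * K₂)), fun a ha => ?_⟩
  rcases le_total ‖a‖ (1 / 2) with hra | hra
  · exact (hM₀ a hra).trans (le_max_left _ _)
  refine le_trans ?_ (le_max_right _ _)
  have hδ := one_sub_norm_sq_pos ha
  have e₁ := hrad k K₁ a ha (h₁ a ha hra).1 (h₁ a ha hra).2
  have e₂ := hrad (k + 1) K₂ a ha (h₂ a ha hra).1 (h₂ a ha hra).2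
  have hdiff : rderiv (fun z => g z * testFun a (k + 1) z) a -
      rderiv (fun z => g z * testFun a k z) a =
      g a * ((‖a‖ ^ 2 / (1 - ‖a‖ ^ 2) : ℝ) : ℂ) := by
    rw [rderiv_mul_testFun_self ha _ hg, rderiv_mul_testFun_self ha _ hg]
    push_cast
    ring
  have hn : ‖g a‖ * (‖a‖ ^ 2 / (1 - ‖a‖ ^ 2)) ≤
      ‖rderiv (fun z => g z * testFun a (k + 1) z) a‖ +
        ‖rderiv (fun z => g z * testFun a k z) a‖ := by
    have := norm_sub_le (rderiv (fun z => g z * testFun a (k + 1) z) a)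
      (rderiv (fun z => g z * testFun a k z) a)
    rwa [hdiff, norm_mul, Complex.norm_real, Real.norm_of_nonneg (by positivity)] at this
  have hn2 := mul_le_mul_of_nonneg_right hn hδ.le
  rw [mul_assoc, div_mul_cancel₀ _ hδ.ne', add_mul] at hn2
  have hra2 : 1 / 4 ≤ ‖a‖ ^ 2 := by nlinarith
  nlinarith [mul_le_mul_of_nonneg_left hra2 (norm_nonneg (g a))]
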